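/- (Weighted Fréchet–Kolmogorov theorem) Let T > 0, 1 < p < ∞, 0 ≤ β < 1 with p + β ≤ 2, and ω ∈ A_p^+. Let G be a set of measurable functions on ℝ vanishing outside (0,T) such that: (1) sup_{f∈G} ‖f‖_{L^{p,β}_+((0,T),ω)} < ∞; (2) sup_{f∈G} ‖f(·+l) − f(·)‖_{L^{p,β}_+((0,T),ω)} → 0 as l → 0; (3) sup_{f∈G} ‖f·χ_{(R,T)}‖_{L^{p,β}_+((0,T),ω)} → 0 as R → T⁻. Then G is totally bounded in the L^{p,β}_+((0,T),ω) norm: every sequence (f_j) in G has a subsequence (f_{j_k}) that is Cauchy with respect to ‖·‖_{L^{p,β}_+((0,T),ω)}. -/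

import Mathlib

open MeasureTheory
open scoped ENNReal

/-- The one-sided Muckenhoupt class `A_p^+` for `1 < p < ∞`, with `p' = p/(p−1)`. -/
def MemApPlus (ω : ℝ → ℝ) (p : ℝ) : Prop :=
  ∃ C > (0:ℝ), ∀ a b c : ℝ, a < b → b < c →
    (∫ x in a..b, ω x) * (∫ x in b..c, (ω x) ^ (1 - p / (p - 1))) ^ (p - 1)
      ≤ C * (c - a) ^ p

/-- `Φ⁺_{ω,λ,θ}(x0,h) = h^{λ−1} ∫_{x0−h}^{x0} ω^θ`. -/
noncomputable def Phi (ω : ℝ → ℝ) (lam θ x0 h : ℝ) : ℝ :=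
  h ^ (lam - 1) * ∫ y in (x0 - h)..x0, (ω y) ^ θ

/-- The local one-sided weighted Morrey norm `‖f‖_{L^{p,λ}_+((0,T),ω^θ)}`. -/
noncomputable def morreyLocal (T : ℝ) (ω : ℝ → ℝ) (p lam θ : ℝ) (f : ℝ → ℝ) : ℝ≥0∞ :=
  ⨆ x0 ∈ Set.Icc (0:ℝ) T, ⨆ h ∈ Set.Ioc (0:ℝ) T,
    ((∫⁻ y in Set.Ioo x0 (x0 + h) ∩ Set.Ioo 0 T, ENNReal.ofReal (|f y| ^ p)) /
      ENNReal.ofReal (Phi ω lam θ x0 h)) ^ (1 / p)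


namespace WFK

lemma E_eq {p : ℝ} (hp : 1 < p) (f : ℝ → ℝ) (μ : Measure ℝ) :
    eLpNorm f (ENNReal.ofReal p) μ = (∫⁻ y, ‖f y‖ₑ ^ p ∂μ) ^ (1 / p) := by
  have h0 : ENNReal.ofReal p ≠ 0 := by simp; linarith
  rw [eLpNorm_eq_lintegral_rpow_enorm_toReal h0 ENNReal.ofReal_ne_top,
    ENNReal.toReal_ofReal (by linarith)]

lemma E_pow {p : ℝ} (hp : 1 < p) (f : ℝ → ℝ) (μ : Measure ℝ) :
    (eLpNorm f (ENNReal.ofReal p) μ) ^ p = ∫⁻ y, ‖f y‖ₑ ^ p ∂μ := by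
  rw [E_eq hp, ← ENNReal.rpow_mul, one_div_mul_cancel (by linarith), ENNReal.rpow_one]

lemma Phi_pos {ω : ℝ → ℝ} (hpos : ∀ x, 0 < ω x) (hloc : LocallyIntegrable ω volume)
    (β x h : ℝ) (hh : 0 < h) : 0 < Phi ω β 1 x h := by
  unfold Phi
  apply mul_pos (Real.rpow_pos_of_pos hh _)
  simp only [Real.rpow_one]
  apply intervalIntegral.intervalIntegral_pos_of_pos
  · exact (hloc.integrableOn_isCompact isCompact_uIcc).intervalIntegrable
  · exact hpos
  · linarith

lemma ofReal_abs_rpow {p : ℝ} (hp : 1 < p) (x : ℝ) :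
    ENNReal.ofReal (|x| ^ p) = ‖x‖ₑ ^ p := by
  rw [← ENNReal.ofReal_rpow_of_nonneg (abs_nonneg x) (by linarith), Real.enorm_eq_ofReal_abs]

lemma morrey_le_iff {T p β : ℝ} {ω : ℝ → ℝ} (hp : 1 < p)
    (hpos : ∀ x, 0 < ω x) (hloc : LocallyIntegrable ω volume) (f : ℝ → ℝ) (C : ℝ≥0∞) :
    morreyLocal T ω p β 1 f ≤ C ↔ ∀ x ∈ Set.Icc (0:ℝ) T, ∀ h ∈ Set.Ioc (0:ℝ) T,
      ∫⁻ y in Set.Ioo x (x + h) ∩ Set.Ioo 0 T, ‖f y‖ₑ ^ p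
        ≤ C ^ p * ENNReal.ofReal (Phi ω β 1 x h) := by
  unfold morreyLocal
  simp only [iSup_le_iff]
  refine forall₂_congr fun x _ => forall₂_congr fun h hh => ?_
  have hP := Phi_pos hpos hloc β x h hh.1
  rw [one_div, ENNReal.rpow_inv_le_iff (by linarith), ENNReal.div_le_iff]
  · simp only [ofReal_abs_rpow hp]
  · simpa using hP
  · exact ENNReal.ofReal_ne_top

lemma morrey_le_iff' {T p β : ℝ} {ω : ℝ → ℝ} (hp : 1 < p)
    (hpos : ∀ x, 0 < ω x) (hloc : LocallyIntegrable ω volume) (f : ℝ → ℝ) (C : ℝ≥0∞) :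
    morreyLocal T ω p β 1 f ≤ C ↔ ∀ x ∈ Set.Icc (0:ℝ) T, ∀ h ∈ Set.Ioc (0:ℝ) T,
      eLpNorm f (ENNReal.ofReal p) (volume.restrict (Set.Ioo x (x + h) ∩ Set.Ioo 0 T))
        ≤ C * ENNReal.ofReal (Phi ω β 1 x h) ^ (1 / p) := by
  rw [morrey_le_iff hp hpos hloc]
  refine forall₂_congr fun x _ => forall₂_congr fun h hh => ?_
  rw [E_eq hp, one_div, ENNReal.rpow_inv_le_iff (by linarith),
    ENNReal.mul_rpow_of_nonneg _ _ (by linarith), ← ENNReal.rpow_mul,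
    inv_mul_cancel₀ (by linarith), ENNReal.rpow_one]

lemma avg_bound {p : ℝ} (hp : 1 < p) {f : ℝ → ℝ} (hf : Measurable f) (hi : Integrable f)
    {a : ℝ} (ha : 0 < a) (S : Set ℝ) (K : ℝ≥0∞)
    (hK : ∀ t ∈ Set.Ioc 0 a, ∫⁻ y in S, ‖f (y + t) - f y‖ₑ ^ p ≤ K) :
    ∫⁻ y in S, ‖f y - (∫ t in y..(y + a), f t) / a‖ₑ ^ p ≤ K := by
  set μ : Measure ℝ := (ENNReal.ofReal a)⁻¹ • volume.restrict (Set.Ioc 0 a) with hμ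
  have ha0 : ENNReal.ofReal a ≠ 0 := by simpa using ha
  have hprob : IsProbabilityMeasure μ := by
    constructor
    simp [hμ]
    exact ENNReal.inv_mul_cancel ha0 ENNReal.ofReal_ne_top
  have h1 : ∀ y, ‖f y - (∫ t in y..(y + a), f t) / a‖ₑ ^ p
      ≤ ∫⁻ t, ‖f (y + t) - f y‖ₑ ^ p ∂μ := by
    intro y
    have hfint : Integrable (fun t => f (y + t)) (volume.restrict (Set.Ioc 0 a)) :=
      (hi.comp_add_left y).restrict
    have hfintμ : Integrable (fun t => f (y + t)) μ :=
      hfint.smul_measure (ENNReal.inv_ne_top.2 ha0)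
    have e1 : (∫ t in y..(y + a), f t) / a = ∫ t, f (y + t) ∂μ := by
      rw [hμ, integral_smul_measure, ← intervalIntegral.integral_of_le ha.le,
        intervalIntegral.integral_comp_add_left, ENNReal.toReal_inv, ENNReal.toReal_ofReal ha.le]
      simp [div_eq_inv_mul]
    have e2 : f y - (∫ t in y..(y + a), f t) / a = - ∫ t, (f (y + t) - f y) ∂μ := by
      rw [integral_sub hfintμ (integrable_const _), e1]
      simp
    rw [e2, enorm_neg, ← E_pow hp]
    refine ENNReal.rpow_le_rpow ?_ (by linarith)
    calc _ ≤ ∫⁻ t, ‖f (y + t) - f y‖ₑ ∂μ := enorm_integral_le_lintegral_enorm _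
      _ = eLpNorm (fun t => f (y + t) - f y) 1 μ := eLpNorm_one_eq_lintegral_enorm.symm
      _ ≤ _ := eLpNorm_le_eLpNorm_of_exponent_le (by simpa using hp.le)
          (by have : Measurable (fun t => f (y + t) - f y) := by fun_prop
              exact this.aestronglyMeasurable)
  calc _ ≤ ∫⁻ y in S, ∫⁻ t, ‖f (y + t) - f y‖ₑ ^ p ∂μ := lintegral_mono h1
    _ = ∫⁻ t, (∫⁻ y in S, ‖f (y + t) - f y‖ₑ ^ p) ∂μ := by
        apply lintegral_lintegral_swap
        fun_prop
    _ ≤ ∫⁻ t, K ∂μ := by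
        apply lintegral_mono_ae
        refine Measure.ae_smul_measure ?_ _
        filter_upwards [ae_restrict_mem measurableSet_Ioc] with t ht
        exact hK t ht
    _ = K := by simp

lemma spread {p : ℝ} {f : ℝ → ℝ} (hf : Measurable f)
    {x h δ c d : ℝ} (K : ℝ≥0∞) (h1 : x + h - δ ≤ c) (h2 : d ≤ x + δ)
    (hK : ∀ l ∈ Set.Ioo (-δ) δ, ∫⁻ y in Set.Ioo x (x + h), ‖f (y + l)‖ₑ ^ p ≤ K) :
    ENNReal.ofReal h * ∫⁻ y in Set.Ioo c d, ‖f y‖ₑ ^ p ≤ ENNReal.ofReal (2 * δ) * K := by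
  have key : ∀ y ∈ Set.Ioo x (x + h), ∫⁻ y in Set.Ioo c d, ‖f y‖ₑ ^ p
      ≤ ∫⁻ l in Set.Ioo (-δ) δ, ‖f (y + l)‖ₑ ^ p := by
    intro y hy
    have : ∫⁻ l in Set.Ioo (-δ) δ, ‖f (y + l)‖ₑ ^ p
        = ∫⁻ l in Set.Ioo (y - δ) (y + δ), ‖f l‖ₑ ^ p := by
      rw [← lintegral_indicator measurableSet_Ioo, ← lintegral_indicator measurableSet_Ioo,
        ← lintegral_add_left_eq_self ((Set.Ioo (y - δ) (y + δ)).indicator _) y]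
      congr 1
      ext l
      by_cases hl : l ∈ Set.Ioo (-δ) δ
      · rw [Set.indicator_of_mem hl, Set.indicator_of_mem]
        exact ⟨by linarith [hl.1], by linarith [hl.2]⟩
      · rw [Set.indicator_of_notMem hl, Set.indicator_of_notMem]
        intro h'
        exact hl ⟨by linarith [h'.1], by linarith [h'.2]⟩
    rw [this]
    exact lintegral_mono_set (Set.Ioo_subset_Ioo (by linarith [hy.2]) (by linarith [hy.1]))
  calc ENNReal.ofReal h * ∫⁻ y in Set.Ioo c d, ‖f y‖ₑ ^ p
      = ∫⁻ y in Set.Ioo x (x + h), ∫⁻ y in Set.Ioo c d, ‖f y‖ₑ ^ p := by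
        simp [mul_comm]
    _ ≤ ∫⁻ y in Set.Ioo x (x + h), ∫⁻ l in Set.Ioo (-δ) δ, ‖f (y + l)‖ₑ ^ p :=
        setLIntegral_mono' measurableSet_Ioo key
    _ = ∫⁻ l in Set.Ioo (-δ) δ, ∫⁻ y in Set.Ioo x (x + h), ‖f (y + l)‖ₑ ^ p := by
        apply lintegral_lintegral_swap
        fun_prop
    _ ≤ ∫⁻ l in Set.Ioo (-δ) δ, K := setLIntegral_mono' measurableSet_Ioo hK
    _ = _ := by
        rw [setLIntegral_const, Real.volume_Ioo, mul_comm]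
        ring_nf

lemma holder {p T : ℝ} (hp : 1 < p) {f : ℝ → ℝ} (hf : Measurable f) (K : ℝ≥0∞) (hK : K ≠ ⊤)
    (hE : eLpNorm f (ENNReal.ofReal p) (volume.restrict (Set.Ioo 0 T)) ≤ K)
    {x y : ℝ} (hx : 0 ≤ x) (hxy : x ≤ y) (hy : y ≤ T) :
    |∫ t in x..y, f t| ≤ K.toReal * (y - x) ^ (1 - 1 / p) := by
  have hp' : 0 ≤ 1 - 1 / p := by
    rw [sub_nonneg, div_le_one (by linarith)]; exact hp.le
  have h1 : ‖∫ t in x..y, f t‖ₑ ≤ K * ENNReal.ofReal (y - x) ^ (1 - 1 / p) := by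
    rw [intervalIntegral.integral_of_le hxy, integral_Ioc_eq_integral_Ioo]
    calc _ ≤ ∫⁻ t in Set.Ioo x y, ‖f t‖ₑ := enorm_integral_le_lintegral_enorm _
      _ = eLpNorm f 1 (volume.restrict (Set.Ioo x y)) := eLpNorm_one_eq_lintegral_enorm.symm
      _ ≤ _ := eLpNorm_le_eLpNorm_mul_rpow_measure_univ (q := ENNReal.ofReal p)
          (by simpa using hp.le) hf.aestronglyMeasurable
      _ ≤ _ := by
        gcongr
        · exact (eLpNorm_mono_measure f (Measure.restrict_mono (Set.Ioo_subset_Ioo hx hy) le_rfl)).trans hE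
        · rw [ENNReal.toReal_ofReal (by linarith)]
          simp
  have h2 := ENNReal.toReal_mono (by finiteness) h1
  rw [ENNReal.toReal_mul, ← ENNReal.toReal_rpow, ENNReal.toReal_ofReal (by linarith)] at h2
  simpa using h2

end WFK

namespace WFK

lemma aa {T : ℝ} (hT : 0 < T) (U : ℕ → ℝ → ℝ) (K q : ℝ) (hK : 0 ≤ K) (hq : 0 < q)
    (hU0 : ∀ j, U j 0 = 0)
    (hU : ∀ j x y, 0 ≤ x → x ≤ y → y ≤ T → |U j y - U j x| ≤ K * (y - x) ^ q) :
    ∃ φ : ℕ → ℕ, StrictMono φ ∧ ∀ ε : ℝ, 0 < ε → ∃ N : ℕ, ∀ m n : ℕ, N ≤ m → N ≤ n →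
      ∀ x ∈ Set.Icc (0:ℝ) T, |U (φ m) x - U (φ n) x| < ε := by
  have hU' : ∀ j, ∀ x ∈ Set.Icc (0:ℝ) T, ∀ y ∈ Set.Icc (0:ℝ) T,
      |U j x - U j y| ≤ K * |x - y| ^ q := by
    intro j x hx y hy
    rcases le_total x y with h | h
    · rw [abs_sub_comm, abs_sub_comm x y, abs_of_nonneg (sub_nonneg.2 h)]
      exact hU j x y hx.1 h hy.2
    · rw [abs_of_nonneg (sub_nonneg.2 h)]
      exact hU j y x hy.1 h hx.2
  have hlim : Filter.Tendsto (fun s : ℝ => K * |s| ^ q) (nhds 0) (nhds 0) := by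
    have : Continuous (fun s : ℝ => K * |s| ^ q) :=
      continuous_const.mul (continuous_abs.rpow_const (fun _ => Or.inr hq.le))
    simpa [Real.zero_rpow hq.ne'] using this.tendsto 0
  have hmod : ∀ ε : ℝ, 0 < ε → ∃ δ > 0, ∀ j, ∀ x ∈ Set.Icc (0:ℝ) T, ∀ y ∈ Set.Icc (0:ℝ) T,
      |x - y| < δ → |U j x - U j y| < ε := by
    intro ε hε
    obtain ⟨δ, hδ, h⟩ := Metric.eventually_nhds_iff.1 (hlim.eventually (gt_mem_nhds hε))
    refine ⟨δ, hδ, fun j x hx y hy hxy => (hU' j x hx y hy).trans_lt (h ?_)⟩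
    simpa using hxy
  have hcont : ∀ j, Continuous (fun x : Set.Icc (0:ℝ) T => U j x) := by
    intro j
    rw [Metric.continuous_iff]
    intro b ε hε
    obtain ⟨δ, hδ, h⟩ := hmod ε hε
    exact ⟨δ, hδ, fun a ha => h j a a.2 b b.2 ha⟩
  let V : ℕ → BoundedContinuousFunction (Set.Icc (0:ℝ) T) ℝ := fun j =>
    BoundedContinuousFunction.mkOfCompact ⟨_, hcont j⟩
  have hcomp : IsCompact (closure (Set.range V)) := by
    apply BoundedContinuousFunction.arzela_ascoli (Set.Icc (-(K * T ^ q)) (K * T ^ q)) isCompact_Icc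
    · rintro _ x ⟨j, rfl⟩
      have := hU j 0 x le_rfl x.2.1 x.2.2
      rw [hU0, sub_zero, sub_zero] at this
      have h2 : K * (x:ℝ) ^ q ≤ K * T ^ q := by
        gcongr
        · exact x.2.1
        · exact x.2.2
      exact abs_le.1 (this.trans h2)
    · apply UniformEquicontinuous.equicontinuous
      rw [Metric.uniformEquicontinuous_iff]
      intro ε hε
      obtain ⟨δ, hδ, h⟩ := hmod ε hε
      refine ⟨δ, hδ, ?_⟩
      rintro x y hxy ⟨_, ⟨j, rfl⟩⟩
      exact h j x x.2 y y.2 hxy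
  obtain ⟨g, -, φ, hφ, hlim⟩ := hcomp.tendsto_subseq (x := V)
    (fun n => subset_closure (Set.mem_range_self n))
  refine ⟨φ, hφ, fun ε hε => ?_⟩
  obtain ⟨N, hN⟩ := Metric.cauchySeq_iff.1 hlim.cauchySeq ε hε
  refine ⟨N, fun m n hm hn x hx => ?_⟩
  exact (BoundedContinuousFunction.dist_coe_le_dist (f := V (φ m)) (g := V (φ n)) ⟨x, hx⟩).trans_lt
    (hN m hm n hn)

lemma dich {T p β : ℝ} {ω : ℝ → ℝ} (hT : 0 < T) (hp : 1 < p) (hβ1 : β < 1)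
    (hpos : ∀ x, 0 < ω x) (hloc : LocallyIntegrable ω volume) {G : Set (ℝ → ℝ)}
    (hmeas : ∀ f ∈ G, Measurable f) {r R : ℝ} (hr : 0 < r) (hR : R + r ≤ T)
    {M : ℝ≥0∞} (hM : M ≠ ⊤)
    (hsh : ∀ f ∈ G, ∀ l ∈ Set.Ioo (-(8 * r)) (8 * r),
      morreyLocal T ω p β 1 (fun x => f (x + l)) ≤ M) (z : ℝ) :
    ∃ C : ℝ≥0∞, C ≠ ⊤ ∧ ∀ x ∈ Set.Icc 0 R, x ∈ Set.Ioo (z - r / 4) (z + r / 4) →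
      ∀ h ∈ Set.Ioc 0 T,
      ENNReal.ofReal h ≤ C * ENNReal.ofReal (Phi ω β 1 x h) ∨
      (h < r ∧ ∀ f ∈ G, ∀ᵐ t ∂(volume.restrict (Set.Ioo (z - 3 * r) (z + 3 * r))), f t = 0) := by
  have hii : ∀ c d : ℝ, IntervalIntegrable ω volume c d := fun c d =>
    (hloc.integrableOn_isCompact isCompact_uIcc).intervalIntegrable
  set c0 : ℝ := ∫ y in (z - r / 2)..(z - r / 4), ω y with hc0
  have hc0p : 0 < c0 := intervalIntegral.intervalIntegral_pos_of_pos (hii _ _) hpos (by linarith)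
  set c1 : ℝ := T ^ (β - 1) * c0 with hc1
  have hc1p : 0 < c1 := mul_pos (Real.rpow_pos_of_pos hT _) hc0p
  -- large `h`
  have hlarge : ∀ x ∈ Set.Ioo (z - r / 4) (z + r / 4), ∀ h ∈ Set.Ioc 0 T, r ≤ h →
      ENNReal.ofReal h ≤ ENNReal.ofReal (T / c1) * ENNReal.ofReal (Phi ω β 1 x h) := by
    intro x hx h hh hrh
    have hP : c1 ≤ Phi ω β 1 x h := by
      unfold Phi
      simp only [Real.rpow_one]
      have h1 : T ^ (β - 1) ≤ h ^ (β - 1) :=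
        Real.rpow_le_rpow_of_nonpos hh.1 hh.2 (by linarith)
      have h2 : c0 ≤ ∫ y in (x - h)..x, ω y := by
        apply intervalIntegral.integral_mono_interval
        · linarith [hx.2]
        · linarith
        · linarith [hx.1]
        · exact Filter.Eventually.of_forall fun x => (hpos x).le
        · exact hii _ _
      exact mul_le_mul h1 h2 hc0p.le (Real.rpow_nonneg hh.1.le _)
    rw [← ENNReal.ofReal_mul (by positivity)]
    apply ENNReal.ofReal_le_ofReal
    calc h ≤ T := hh.2
      _ = T / c1 * c1 := by field_simp
      _ ≤ _ := by gcongr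
  by_cases hG : ∀ f ∈ G, ∀ᵐ t ∂(volume.restrict (Set.Ioo (z - 3 * r) (z + 3 * r))), f t = 0
  · refine ⟨_, ENNReal.ofReal_ne_top (r := T / c1), fun x _ hx h hh => ?_⟩
    rcases lt_or_ge h r with h1 | h1
    · exact Or.inr ⟨h1, hG⟩
    · exact Or.inl (hlarge x hx h hh h1)
  · push Not at hG
    obtain ⟨f, hf, hne⟩ := hG
    set s := ∫⁻ y in Set.Ioo (z - 3 * r) (z + 3 * r), ‖f y‖ₑ ^ p with hs
    have hs0 : s ≠ 0 := by
      intro h0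
      apply hne
      have hm : Measurable fun y => ‖f y‖ₑ ^ p := by
        have := hmeas f hf
        fun_prop
      rw [hs, lintegral_eq_zero_iff hm] at h0
      filter_upwards [h0] with y hy
      have hy' : ‖f y‖ₑ ^ p = 0 := hy
      rw [ENNReal.rpow_eq_zero_iff_of_pos (by linarith)] at hy'
      simpa using hy'
    have hMp : M ^ p ≠ ⊤ := ENNReal.rpow_ne_top_of_nonneg (by linarith) hM
    refine ⟨ENNReal.ofReal (T / c1) + ENNReal.ofReal (2 * (8 * r)) * M ^ p / s, ?_, ?_⟩
    · exact ENNReal.add_ne_top.2 ⟨ENNReal.ofReal_ne_top,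
        ENNReal.div_ne_top (ENNReal.mul_ne_top ENNReal.ofReal_ne_top hMp) hs0⟩
    · intro x hxR hx h hh
      left
      rcases lt_or_ge h r with h1 | h1
      · have key := spread (p := p) (hmeas f hf) (x := x) (h := h) (δ := 8 * r)
          (c := z - 3 * r) (d := z + 3 * r) (M ^ p * ENNReal.ofReal (Phi ω β 1 x h))
          (by linarith [hx.2]) (by linarith [hx.1]) (by
            intro l hl
            have h3 := (morrey_le_iff hp hpos hloc _ _).1 (hsh f hf l hl) x
              ⟨hxR.1, by linarith [hxR.2]⟩ h hh
            rwa [Set.inter_eq_left.2 (Set.Ioo_subset_Ioo hxR.1 (by linarith [hxR.2]))] at h3)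
        calc ENNReal.ofReal h
            ≤ (ENNReal.ofReal (2 * (8 * r)) * (M ^ p * ENNReal.ofReal (Phi ω β 1 x h))) / s := by
              rw [ENNReal.le_div_iff_mul_le (Or.inl hs0) (Or.inr (by finiteness))]
              exact key
          _ = ENNReal.ofReal (2 * (8 * r)) * M ^ p / s * ENNReal.ofReal (Phi ω β 1 x h) := by
              rw [← mul_assoc, ENNReal.mul_div_right_comm]
          _ ≤ _ := by gcongr; exact le_add_self
      · refine (hlarge x hx h hh h1).trans ?_
        gcongr
        exact le_self_add

lemma local_core {T p β : ℝ} {ω : ℝ → ℝ} (hT : 0 < T) (hp : 1 < p) (hβ1 : β < 1)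
    (hpos : ∀ x, 0 < ω x) (hloc : LocallyIntegrable ω volume) {G : Set (ℝ → ℝ)}
    (hmeas : ∀ f ∈ G, Measurable f) {r R : ℝ} (hr : 0 < r) (hR : R + r ≤ T)
    {M : ℝ≥0∞} (hM : M ≠ ⊤)
    (hsh : ∀ f ∈ G, ∀ l ∈ Set.Ioo (-(8 * r)) (8 * r),
      morreyLocal T ω p β 1 (fun x => f (x + l)) ≤ M)
    {a : ℝ} (ha : 0 < a) (har : a ≤ r) (v : ℕ → ℝ → ℝ) (hv : ∀ j, v j ∈ G)
    (F : ℕ → ℝ → ℝ) (hF : ∀ j x, F j x = (∫ t in x..(x + a), v j t) / a)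
    (hconv : ∀ ε : ℝ, 0 < ε → ∃ N : ℕ, ∀ m n : ℕ, N ≤ m → N ≤ n →
      ∀ x ∈ Set.Icc (0:ℝ) R, |F m x - F n x| ≤ ε)
    (ε : ℝ≥0∞) (hε : 0 < ε) (z : ℝ) :
    ∃ N : ℕ, ∀ m n : ℕ, N ≤ m → N ≤ n → ∀ x ∈ Set.Ioo (z - r / 4) (z + r / 4), x ∈ Set.Icc 0 R →
      ∀ h ∈ Set.Ioc 0 T, ∫⁻ y in Set.Ioo x (x + h) ∩ Set.Ioo 0 T,
        ‖(Set.Iic R).indicator (fun y => F m y - F n y) y‖ₑ ^ p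
          ≤ ε ^ p * ENNReal.ofReal (Phi ω β 1 x h) := by
  obtain ⟨C, hC, hd⟩ := dich hT hp hβ1 hpos hloc hmeas hr hR hM hsh z
  have hη : ∃ η : ℝ, 0 < η ∧ ENNReal.ofReal η ^ p * C ≤ ε ^ p := by
    have hεp : 0 < ε ^ p := ENNReal.rpow_pos_of_nonneg hε (by linarith)
    have ht : Filter.Tendsto (fun η : ℝ => ENNReal.ofReal η ^ p * C) (nhds 0) (nhds 0) := by
      have h1 : Filter.Tendsto (fun η : ℝ => ENNReal.ofReal η ^ p) (nhds 0) (nhds 0) := by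
        have : Continuous (fun η : ℝ => ENNReal.ofReal η ^ p) :=
          (ENNReal.continuous_rpow_const).comp ENNReal.continuous_ofReal
        have h2 := this.tendsto 0
        simpa [ENNReal.zero_rpow_of_pos (show 0 < p by linarith)] using h2
      simpa using ENNReal.Tendsto.mul_const h1 (Or.inr hC)
    obtain ⟨η, hη1, hη2⟩ := (((ht.mono_left nhdsWithin_le_nhds).eventually
      (gt_mem_nhds hεp)).and (self_mem_nhdsWithin (s := Set.Ioi (0:ℝ)))).exists
    exact ⟨η, hη2, hη1.le⟩
  obtain ⟨η, hη0, hηC⟩ := hη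
  obtain ⟨N, hN⟩ := hconv η hη0
  refine ⟨N, fun m n hm hn x hx hxR h hh => ?_⟩
  rcases hd x hxR hx h hh with h1 | ⟨h1, h2⟩
  · calc _ ≤ ∫⁻ y in Set.Ioo x (x + h) ∩ Set.Ioo 0 T, ENNReal.ofReal η ^ p := by
          refine setLIntegral_mono' (measurableSet_Ioo.inter measurableSet_Ioo) fun y hy => ?_
          refine ENNReal.rpow_le_rpow ?_ (by linarith)
          by_cases hyR : y ∈ Set.Iic R
          · rw [Set.indicator_of_mem hyR, Real.enorm_eq_ofReal_abs]
            exact ENNReal.ofReal_le_ofReal (hN m n hm hn y ⟨hy.2.1.le, hyR⟩)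
          · rw [Set.indicator_of_notMem hyR]; simp
      _ ≤ ENNReal.ofReal η ^ p * ENNReal.ofReal h := by
          rw [setLIntegral_const]
          gcongr
          calc _ ≤ volume (Set.Ioo x (x + h)) := measure_mono Set.inter_subset_left
            _ = _ := by simp
      _ ≤ ENNReal.ofReal η ^ p * (C * ENNReal.ofReal (Phi ω β 1 x h)) := by gcongr
      _ ≤ _ := by rw [← mul_assoc]; gcongr
  · have hz : ∀ j, ∀ y ∈ Set.Ioo x (x + h), F j y = 0 := by
      intro j y hy
      rw [hF, intervalIntegral.integral_of_le (by linarith)]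
      have : ∫ t in Set.Ioc y (y + a), v j t = 0 := by
        apply integral_eq_zero_of_ae
        refine ae_restrict_of_ae_restrict_of_subset ?_ (h2 (v j) (hv j))
        intro t ht
        exact ⟨by linarith [ht.1, hy.1, hx.1], by linarith [ht.2, hy.2, hx.2]⟩
      simp [this]
    calc _ ≤ ∫⁻ y in Set.Ioo x (x + h) ∩ Set.Ioo 0 T, 0 := by
          refine setLIntegral_mono' (measurableSet_Ioo.inter measurableSet_Ioo) fun y hy => ?_
          have : (Set.Iic R).indicator (fun y => F m y - F n y) y = 0 := by
            apply Set.indicator_apply_eq_zero.2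
            intro _
            rw [hz m y hy.1, hz n y hy.1, sub_self]
          rw [this]
          simp [show 0 < p by linarith]
      _ ≤ _ := by simp

lemma morrey_add_le {T p β : ℝ} {ω : ℝ → ℝ} (hp : 1 < p)
    (hpos : ∀ x, 0 < ω x) (hloc : LocallyIntegrable ω volume) {f g : ℝ → ℝ} {A B : ℝ≥0∞}
    (hf : Measurable f) (hg : Measurable g)
    (h1 : morreyLocal T ω p β 1 f ≤ A) (h2 : morreyLocal T ω p β 1 g ≤ B) :
    morreyLocal T ω p β 1 (fun x => f x + g x) ≤ A + B := by
  rw [morrey_le_iff' hp hpos hloc] at *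
  intro x hx h hh
  rw [add_mul]
  refine (eLpNorm_add_le hf.aestronglyMeasurable hg.aestronglyMeasurable ?_).trans
    (add_le_add (h1 x hx h hh) (h2 x hx h hh))
  simpa using hp.le

lemma morrey_neg {T p β : ℝ} {ω : ℝ → ℝ} (f : ℝ → ℝ) :
    morreyLocal T ω p β 1 (fun x => - f x) = morreyLocal T ω p β 1 f := by
  simp [morreyLocal]

end WFK

/-- Weighted Fréchet–Kolmogorov theorem: a uniformly bounded, uniformly
equicontinuous family vanishing uniformly at the right endpoint is totally
bounded in `L^{p,β}_+((0,T),ω)`. -/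
theorem weighted_frechet_kolmogorov (T p β : ℝ) (hT : 0 < T)
    (hp : 1 < p) (hβ0 : 0 ≤ β) (hβ1 : β < 1) (hpβ : p + β ≤ 2)
    (ω : ℝ → ℝ) (hpos : ∀ x, 0 < ω x) (hloc : LocallyIntegrable ω volume)
    (hA : MemApPlus ω p)
    (G : Set (ℝ → ℝ))
    (hmeas : ∀ f ∈ G, Measurable f)
    (hsupp : ∀ f ∈ G, ∀ x : ℝ, x ∉ Set.Ioo 0 T → f x = 0)
    (hbdd : (⨆ f ∈ G, morreyLocal T ω p β 1 f) < ⊤)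
    (hequi : Filter.Tendsto
      (fun l : ℝ => ⨆ f ∈ G, morreyLocal T ω p β 1 (fun x => f (x + l) - f x))
      (nhds 0) (nhds 0))
    (hvanish : Filter.Tendsto
      (fun R : ℝ => ⨆ f ∈ G,
        morreyLocal T ω p β 1 (Set.indicator (Set.Ioo R T) f))
      (nhdsWithin T (Set.Iio T)) (nhds 0)) :
    ∀ u : ℕ → ℝ → ℝ, (∀ j, u j ∈ G) →
      ∃ φ : ℕ → ℕ, StrictMono φ ∧
        ∀ ε : ℝ, 0 < ε → ∃ N : ℕ, ∀ m n : ℕ, N ≤ m → N ≤ n →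
          morreyLocal T ω p β 1 (fun x => u (φ m) x - u (φ n) x)
            < ENNReal.ofReal ε := by
  intro u hu
  have hu_meas : ∀ j, Measurable (u j) := fun j => hmeas _ (hu j)
  set M : ℝ≥0∞ := ⨆ f ∈ G, morreyLocal T ω p β 1 f with hM
  have hMf : ∀ f ∈ G, morreyLocal T ω p β 1 f ≤ M := fun f hf =>
    le_iSup₂ (f := fun f (_ : f ∈ G) => morreyLocal T ω p β 1 f) f hf
  -- `L^p` bound
  set K : ℝ≥0∞ := M * ENNReal.ofReal (Phi ω β 1 0 T) ^ (1 / p) with hK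
  have hKtop : K ≠ ⊤ := ENNReal.mul_ne_top hbdd.ne
    (ENNReal.rpow_ne_top_of_nonneg (by positivity) ENNReal.ofReal_ne_top)
  have hLp : ∀ f ∈ G, eLpNorm f (ENNReal.ofReal p) (volume.restrict (Set.Ioo 0 T)) ≤ K := by
    intro f hf
    have := (WFK.morrey_le_iff' hp hpos hloc _ _).1 (hMf f hf) 0 ⟨le_rfl, hT.le⟩ T ⟨hT, le_rfl⟩
    simpa [hK] using this
  have hfint : ∀ f ∈ G, Integrable f := by
    intro f hf
    have h1 : MemLp f (ENNReal.ofReal p) (volume.restrict (Set.Ioo 0 T)) :=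
      ⟨(hmeas f hf).aestronglyMeasurable, (hLp f hf).trans_lt hKtop.lt_top⟩
    have h2 : IntegrableOn f (Set.Ioo 0 T) := h1.integrable (by simpa using hp.le)
    rwa [integrableOn_iff_integrable_of_support_subset] at h2
    intro x hx
    by_contra hx'
    exact hx (hsupp f hf x hx')
  have hii : ∀ j c d, IntervalIntegrable (u j) volume c d := fun j c d =>
    (hfint _ (hu j)).intervalIntegrable
  -- a uniformly convergent subsequence of primitives
  obtain ⟨φ, hφ, hcauchy⟩ := WFK.aa hT (fun j x => ∫ t in (0:ℝ)..x, u j t) K.toReal (1 - 1 / p)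
    ENNReal.toReal_nonneg (by rw [sub_pos, div_lt_one (by linarith)]; exact hp) (by simp) (by
      intro j x y hx hxy hy
      rw [intervalIntegral.integral_interval_sub_left (hii j _ _) (hii j _ _)]
      exact WFK.holder hp (hu_meas j) K hKtop (hLp _ (hu j)) hx hxy hy)
  refine ⟨φ, hφ, ?_⟩
  -- bound for translates
  have hequi' : ∀ e : ℝ≥0∞, 0 < e → ∃ δ > 0, ∀ l : ℝ, |l| < δ → ∀ f ∈ G,
      morreyLocal T ω p β 1 (fun x => f (x + l) - f x) ≤ e := by
    intro e he
    obtain ⟨δ, hδ, h⟩ := Metric.eventually_nhds_iff.1 (hequi.eventually (gt_mem_nhds he))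
    refine ⟨δ, hδ, fun l hl f hf => ?_⟩
    have h1 := h (y := l) (by simpa using hl)
    exact (le_iSup₂ (f := fun f (_ : f ∈ G) =>
      morreyLocal T ω p β 1 (fun x => f (x + l) - f x)) f hf).trans h1.le
  obtain ⟨δ₀, hδ₀, hsh₀⟩ := hequi' 1 one_pos
  have hsh : ∀ f ∈ G, ∀ l : ℝ, |l| < δ₀ →
      morreyLocal T ω p β 1 (fun x => f (x + l)) ≤ 1 + M := by
    intro f hf l hl
    have hfm := hmeas f hf
    have := WFK.morrey_add_le (f := fun x => f (x + l) - f x) (g := f) hp hpos hloc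
      (by fun_prop) hfm (hsh₀ l hl f hf) (hMf f hf)
    simpa using this
  intro ε hε
  set e : ℝ≥0∞ := ENNReal.ofReal (ε / 10) with he
  have he0 : 0 < e := by rw [he, ENNReal.ofReal_pos]; positivity
  obtain ⟨δ₁, hδ₁, hsh₁⟩ := hequi' e he0
  obtain ⟨R, hR, hR0, hRT⟩ : ∃ R : ℝ, (⨆ f ∈ G,
      morreyLocal T ω p β 1 (Set.indicator (Set.Ioo R T) f)) < e ∧ 0 < R ∧ R < T := by
    have h0 : ∀ᶠ R in nhdsWithin T (Set.Iio T), 0 < R :=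
      nhdsWithin_le_nhds (lt_mem_nhds hT)
    obtain ⟨R, h1, h2, h3⟩ := ((hvanish.eventually (gt_mem_nhds he0)).and
      (h0.and self_mem_nhdsWithin)).exists
    exact ⟨R, h1, h2, h3⟩
  have hRf : ∀ f ∈ G, morreyLocal T ω p β 1 (Set.indicator (Set.Ioo R T) f) ≤ e := fun f hf =>
    (le_iSup₂ (f := fun f (_ : f ∈ G) =>
      morreyLocal T ω p β 1 (Set.indicator (Set.Ioo R T) f)) f hf).trans hR.le
  obtain ⟨r, hr, hr8, hrR⟩ : ∃ r : ℝ, 0 < r ∧ 8 * r ≤ δ₀ ∧ R + r ≤ T := by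
    refine ⟨min (δ₀ / 8) (T - R), lt_min (by positivity) (by linarith), ?_, ?_⟩
    · linarith [min_le_left (δ₀ / 8) (T - R)]
    · linarith [min_le_right (δ₀ / 8) (T - R)]
  obtain ⟨a, ha, har, haδ⟩ : ∃ a : ℝ, 0 < a ∧ a ≤ r ∧ a < δ₁ := by
    refine ⟨min r (δ₁ / 2), lt_min hr (by positivity), min_le_left _ _, ?_⟩
    linarith [min_le_right r (δ₁ / 2)]
  let F : ℕ → ℝ → ℝ := fun j x => (∫ t in x..(x + a), u (φ j) t) / a
  have hFU : ∀ j x, F j x = ((∫ t in (0:ℝ)..(x + a), u (φ j) t) - ∫ t in (0:ℝ)..x, u (φ j) t) / a := by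
    intro j x
    rw [intervalIntegral.integral_interval_sub_left (hii _ _ _) (hii _ _ _)]
  have hFmeas : ∀ j, Measurable (F j) := by
    intro j
    have hc : Continuous (fun x => ∫ t in (0:ℝ)..x, u (φ j) t) :=
      intervalIntegral.continuous_primitive (fun c d => hii _ c d) 0
    have : F j = fun x => ((∫ t in (0:ℝ)..(x + a), u (φ j) t) - ∫ t in (0:ℝ)..x, u (φ j) t) / a :=
      funext (hFU j)
    rw [this]
    have hc2 := hc.comp (continuous_id.add (continuous_const (y := a)))
    exact ((hc2.sub hc).div_const a).measurable
  have hconv : ∀ η : ℝ, 0 < η → ∃ N : ℕ, ∀ m n : ℕ, N ≤ m → N ≤ n →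
      ∀ x ∈ Set.Icc (0:ℝ) R, |F m x - F n x| ≤ η := by
    intro η hη
    obtain ⟨N, hN⟩ := hcauchy (η * a / 2) (by positivity)
    refine ⟨N, fun m n hm hn x hx => ?_⟩
    have h1 := hN m n hm hn x ⟨hx.1, by linarith [hx.2]⟩
    have h2 := hN m n hm hn (x + a) ⟨by linarith [hx.1], by linarith [hx.2]⟩
    rw [hFU, hFU, ← sub_div, abs_div, abs_of_pos ha, div_le_iff₀ ha]
    simp only [abs_lt] at h1 h2
    rw [abs_le]
    constructor <;> linarith [h1.1, h1.2, h2.1, h2.2]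
  -- compactness in the base point
  have hcompact : ∃ N : ℕ, ∀ m n : ℕ, N ≤ m → N ≤ n → ∀ x ∈ Set.Icc 0 R, x ∈ Set.Icc 0 R →
      ∀ h ∈ Set.Ioc 0 T, ∫⁻ y in Set.Ioo x (x + h) ∩ Set.Ioo 0 T,
        ‖(Set.Iic R).indicator (fun y => F m y - F n y) y‖ₑ ^ p
          ≤ e ^ p * ENNReal.ofReal (Phi ω β 1 x h) := by
    refine isCompact_Icc.induction_on (s := Set.Icc 0 R) (p := fun s => ∃ N : ℕ, ∀ m n : ℕ,
      N ≤ m → N ≤ n → ∀ x ∈ s, x ∈ Set.Icc 0 R →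
      ∀ h ∈ Set.Ioc 0 T, ∫⁻ y in Set.Ioo x (x + h) ∩ Set.Ioo 0 T,
        ‖(Set.Iic R).indicator (fun y => F m y - F n y) y‖ₑ ^ p
          ≤ e ^ p * ENNReal.ofReal (Phi ω β 1 x h)) ?_ ?_ ?_ ?_
    · exact ⟨0, by simp⟩
    · rintro s t hst ⟨N, hN⟩
      exact ⟨N, fun m n hm hn x hx => hN m n hm hn x (hst hx)⟩
    · rintro s t ⟨N₁, h₁⟩ ⟨N₂, h₂⟩
      refine ⟨max N₁ N₂, fun m n hm hn x hx => ?_⟩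
      rcases hx with hx | hx
      · exact h₁ m n (le_of_max_le_left hm) (le_of_max_le_left hn) x hx
      · exact h₂ m n (le_of_max_le_right hm) (le_of_max_le_right hn) x hx
    · intro z _
      refine ⟨Set.Ioo (z - r / 4) (z + r / 4),
        mem_nhdsWithin_of_mem_nhds (Ioo_mem_nhds (by linarith) (by linarith)), ?_⟩
      exact WFK.local_core hT hp hβ1 hpos hloc hmeas hr hrR (M := 1 + M)
        (ENNReal.add_ne_top.2 ⟨ENNReal.one_ne_top, hbdd.ne⟩)
        (fun f hf l hl => hsh f hf l (by
          rw [abs_lt]; exact ⟨by linarith [hl.1], by linarith [hl.2]⟩))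
        ha har (fun j => u (φ j)) (fun j => hu _) F (fun _ _ => rfl) hconv e he0 z
  obtain ⟨N, hN⟩ := hcompact
  refine ⟨N, fun m n hm hn => ?_⟩
  -- the middle term
  have hB : morreyLocal T ω p β 1 ((Set.Iic R).indicator (fun y => F m y - F n y)) ≤ e := by
    rw [WFK.morrey_le_iff hp hpos hloc]
    intro x hx h hh
    rcases le_or_gt x R with hxR | hxR
    · exact hN m n hm hn x ⟨hx.1, hxR⟩ ⟨hx.1, hxR⟩ h hh
    · calc _ ≤ ∫⁻ y in Set.Ioo x (x + h) ∩ Set.Ioo 0 T, 0 := by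
            refine setLIntegral_mono' (measurableSet_Ioo.inter measurableSet_Ioo) fun y hy => ?_
            rw [Set.indicator_of_notMem (by simp only [Set.mem_Iic, not_le]; linarith [hy.1.1])]
            simp [show 0 < p by linarith]
        _ ≤ _ := by simp
  -- the mollification error
  have hA : ∀ j, morreyLocal T ω p β 1
      ((Set.Iic R).indicator (fun y => u (φ j) y - F j y)) ≤ e := by
    intro j
    rw [WFK.morrey_le_iff hp hpos hloc]
    intro x hx h hh
    refine le_trans (lintegral_mono fun y => ?_) (WFK.avg_bound hp (hu_meas (φ j))
      (hfint _ (hu (φ j))) ha (Set.Ioo x (x + h) ∩ Set.Ioo 0 T) _ ?_)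
    · refine ENNReal.rpow_le_rpow ?_ (by linarith)
      exact enorm_indicator_le_enorm_self _ _
    · intro t ht
      exact (WFK.morrey_le_iff hp hpos hloc _ _).1 (hsh₁ t (by
        rw [abs_of_pos ht.1]; linarith [ht.2]) _ (hu (φ j))) x hx h hh
  have mA : ∀ j, Measurable ((Set.Iic R).indicator (fun y => u (φ j) y - F j y)) := fun j =>
    ((hu_meas _).sub (hFmeas j)).indicator measurableSet_Iic
  have mB : Measurable ((Set.Iic R).indicator (fun y => F m y - F n y)) :=
    ((hFmeas m).sub (hFmeas n)).indicator measurableSet_Iic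
  have mI : ∀ j, Measurable ((Set.Ioo R T).indicator (u (φ j))) := fun j =>
    (hu_meas _).indicator measurableSet_Ioo
  have hsum := WFK.morrey_add_le hp hpos hloc ((((mA m).add mB).add (mA n).neg).add (mI m)) (mI n).neg
    (WFK.morrey_add_le hp hpos hloc (((mA m).add mB).add (mA n).neg) (mI m)
      (WFK.morrey_add_le hp hpos hloc ((mA m).add mB) (mA n).neg
        (WFK.morrey_add_le hp hpos hloc (mA m) mB (hA m) hB)
        ((WFK.morrey_neg _).le.trans (hA n))) (hRf _ (hu (φ m))))
    ((WFK.morrey_neg _).le.trans (hRf _ (hu (φ n))))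
  have hlt : e + e + e + e + e < ENNReal.ofReal ε := by
    rw [he, ← ENNReal.ofReal_add, ← ENNReal.ofReal_add, ← ENNReal.ofReal_add,
      ← ENNReal.ofReal_add, ENNReal.ofReal_lt_ofReal_iff hε]
    · linarith
    all_goals positivity
  refine lt_of_le_of_lt ?_ hlt
  refine le_trans (le_of_eq ?_) hsum
  congr 1
  ext y
  have hsm := hsupp _ (hu (φ m)) y
  have hsn := hsupp _ (hu (φ n)) y
  by_cases hyR : y ≤ R
  · have h1 : y ∉ Set.Ioo R T := fun h => absurd h.1 (not_lt.2 hyR)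
    simp only [Set.indicator, Set.mem_Iic, hyR, h1, if_true, if_false, Pi.add_apply, Pi.neg_apply]
    ring
  · by_cases hyT : y < T
    · have h1 : y ∈ Set.Ioo R T := ⟨not_le.1 hyR, hyT⟩
      simp only [Set.indicator, Set.mem_Iic, hyR, h1, if_true, if_false, Pi.add_apply, Pi.neg_apply]
      ring
    · have h1 : y ∉ Set.Ioo R T := fun h => hyT h.2
      rw [hsm (fun h => hyT h.2), hsn (fun h => hyT h.2)]
      simp only [Set.indicator, Set.mem_Iic, hyR, h1, if_false, Pi.add_apply, Pi.neg_apply]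
      ring
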